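/- Let (s,x̄) ∈ I × U with x̄ = x(s,t(s,x̄)). Then G_ss(s,x̄) = (1 + t_s(s,x̄)²)·δ(s,t(s,x̄)). In particular, at such a point G_ss(s,x̄) = 0 if and only if δ(s,t(s,x̄)) = 0. -/

import Mathlib

noncomputable section

/-- `det2 u v` is the determinant of the 2×2 matrix with columns `u` and `v`. -/
def det2 (u v : ℝ × ℝ) : ℝ := u.1 * v.2 - u.2 * v.1

/-- Partial derivative with respect to the first coordinate `s`. -/
def pds (f : ℝ × ℝ → ℝ) (p : ℝ × ℝ) : ℝ := fderiv ℝ f p (1, 0)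

/-- Partial derivative with respect to the second coordinate `t`. -/
def pdt (f : ℝ × ℝ → ℝ) (p : ℝ × ℝ) : ℝ := fderiv ℝ f p (0, 1)

/-- The planar map `x = (A, B)`. -/
def xmap (A B : ℝ × ℝ → ℝ) (p : ℝ × ℝ) : ℝ × ℝ := (A p, B p)

/-- The conjugate map `c = (-D, C)`. -/
def cmap (C D : ℝ × ℝ → ℝ) (p : ℝ × ℝ) : ℝ × ℝ := (-D p, C p)

/-- `x_s = (A_s, B_s)`. -/
def xs (A B : ℝ × ℝ → ℝ) (p : ℝ × ℝ) : ℝ × ℝ := (pds A p, pds B p)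

/-- `x_t = (A_t, B_t)`. -/
def xt (A B : ℝ × ℝ → ℝ) (p : ℝ × ℝ) : ℝ × ℝ := (pdt A p, pdt B p)

/-- `δ = A_s B_t - A_t B_s = [x_s, x_t]`. -/
def deltaMap (A B : ℝ × ℝ → ℝ) (p : ℝ × ℝ) : ℝ :=
  pds A p * pdt B p - pdt A p * pds B p

/-!
Write `X` and `K` for `x` and `c` restricted to the curve `r ↦ (r, t(r, x̄))`. The equations for `g`
say `G' = [X', K]`, and differentiating `[x̄ - X, K] = 0` turns this into `G' = [x̄ - X, K']`. At a
parameter where `x̄ = X` the first factor vanishes, so `G'' = [-X', K'] = [K', X']`. There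
`X' = x_s + t_s x_t`, while the Cauchy-Riemann equations give `K' = -x_t + t_s x_s`, so that
`[K', X'] = (1 + t_s²) [x_s, x_t]`.
-/

open Filter Topology

section Bilinear

variable {𝕜 E F G : Type*} [NontriviallyNormedField 𝕜]
  [NormedAddCommGroup E] [NormedSpace 𝕜 E] [NormedAddCommGroup F] [NormedSpace 𝕜 F]
  [NormedAddCommGroup G] [NormedSpace 𝕜 G]

theorem hasDerivAt_bilinear_of_left_eq_zero (L : E →L[𝕜] F →L[𝕜] G) {u : 𝕜 → E} {v : 𝕜 → F}
    {u' : E} {s : 𝕜} (hu : HasDerivAt u u' s) (hus : u s = 0) (hv : ContinuousAt v s) :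
    HasDerivAt (fun r => L (u r) (v r)) (L u' (v s)) s := by
  have hslope : slope (fun r => L (u r) (v r)) s = fun r => L (slope u s r) (v r) := by
    funext r
    simp [slope_def_module, hus]
  rw [hasDerivAt_iff_tendsto_slope, hslope]
  exact (L.continuous₂.tendsto (u', v s)).comp
    (hu.tendsto_slope.prodMk_nhds (hv.tendsto.mono_left nhdsWithin_le_nhds))

end Bilinear

section Determinant

/-- The determinant `det2` as a continuous bilinear map, which gives access to the product rule. -/
def det2CLM : ℝ × ℝ →L[ℝ] ℝ × ℝ →L[ℝ] ℝ :=
  (ContinuousLinearMap.mul ℝ ℝ).bilinearComp (.fst ℝ ℝ ℝ) (.snd ℝ ℝ ℝ) -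
    (ContinuousLinearMap.mul ℝ ℝ).bilinearComp (.snd ℝ ℝ ℝ) (.fst ℝ ℝ ℝ)

theorem det2CLM_apply (u v : ℝ × ℝ) : det2CLM u v = det2 u v := rfl

theorem det2_add_smul_left (a : ℝ) (u v w : ℝ × ℝ) :
    det2 (u + a • v) w = det2 u w + a * det2 v w := by
  simp [← det2CLM_apply]

theorem det2_neg_left (u v : ℝ × ℝ) : det2 (-u) v = det2 v u := by
  simp only [det2, Prod.fst_neg, Prod.snd_neg]
  ring

theorem det2_neg_add_smul_add_smul (a : ℝ) (u v : ℝ × ℝ) :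
    det2 (-v + a • u) (u + a • v) = (1 + a ^ 2) * det2 u v := by
  simp only [det2, Prod.fst_add, Prod.snd_add, Prod.fst_neg, Prod.snd_neg, Prod.smul_fst,
    Prod.smul_snd, smul_eq_mul]
  ring

theorem deltaMap_eq_det2 (A B : ℝ × ℝ → ℝ) (p : ℝ × ℝ) :
    deltaMap A B p = det2 (xs A B p) (xt A B p) := by
  simp only [deltaMap, det2, xs, xt]
  ring

end Determinant

section PlanarCurves

variable {X K : ℝ → ℝ × ℝ} {s : ℝ}

theorem det2_deriv_left_eq_of_eventually_det2_sub_eq_zero {X' K' b : ℝ × ℝ}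
    (hX : HasDerivAt X X' s) (hK : HasDerivAt K K' s)
    (hXK : ∀ᶠ r in 𝓝 s, det2 (b - X r) (K r) = 0) :
    det2 X' (K s) = det2 (b - X s) K' := by
  have hprod : HasDerivAt (fun r => det2 (b - X r) (K r))
      (det2 (b - X s) K' + det2 (-X') (K s)) s :=
    det2CLM.hasDerivAt_of_bilinear (fun _ => hX.const_sub b) fun _ => hK
  have hzero := hprod.unique ((hasDerivAt_const s (0 : ℝ)).congr_of_eventuallyEq hXK)
  simp only [← det2CLM_apply, map_neg, neg_apply] at hzero ⊢
  linarith

theorem hasDerivAt_deriv_of_hasDerivAt_det2 {X' : ℝ → ℝ × ℝ} {G : ℝ → ℝ}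
    (hX : ∀ᶠ r in 𝓝 s, HasDerivAt X (X' r) r) (hK : ContDiffAt ℝ 1 K s)
    (hG : ∀ᶠ r in 𝓝 s, HasDerivAt G (det2 (X' r) (K r)) r)
    (hXK : ∀ᶠ r in 𝓝 s, det2 (X s - X r) (K r) = 0) :
    HasDerivAt (deriv G) (det2 (deriv K s) (X' s)) s := by
  have hKd : ∀ᶠ r in 𝓝 s, DifferentiableAt ℝ K r :=
    (hK.eventually (by simp)).mono fun r hr => hr.differentiableAt one_ne_zero
  have hderivG : deriv G =ᶠ[𝓝 s] fun r => det2 (X s - X r) (deriv K r) := by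
    filter_upwards [hX, hKd, hG, hXK.eventually_nhds] with r hXr hKr hGr hXKr
    rw [hGr.deriv]
    exact det2_deriv_left_eq_of_eventually_det2_sub_eq_zero hXr hKr.hasDerivAt hXKr
  have hdK : ContinuousAt (deriv K) s := (hK.derivWithin (m := 0) (by simp)).continuousAt
  have hprod : HasDerivAt (fun r => det2 (X s - X r) (deriv K r)) (det2 (-X' s) (deriv K s)) s :=
    hasDerivAt_bilinear_of_left_eq_zero det2CLM (hX.self_of_nhds.const_sub (X s)) (sub_self _) hdK
  rw [← det2_neg_left]
  exact hprod.congr_of_eventuallyEq hderivG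

end PlanarCurves

section GraphCurves

variable {A B C D g : ℝ × ℝ → ℝ} {τ : ℝ → ℝ} {τ' s : ℝ}

theorem hasDerivAt_comp_graph (hg : DifferentiableAt ℝ g (s, τ s)) (hτ : HasDerivAt τ τ' s) :
    HasDerivAt (fun r => g (r, τ r)) (pds g (s, τ s) + τ' * pdt g (s, τ s)) s := by
  have hcomp := hg.hasFDerivAt.comp_hasDerivAt s ((hasDerivAt_id s).prodMk hτ)
  have hvelocity : ((1 : ℝ), τ') = (1, 0) + τ' • ((0 : ℝ), (1 : ℝ)) := by simp
  rwa [hvelocity, map_add, map_smul, smul_eq_mul] at hcomp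

theorem hasDerivAt_xmap_comp_graph (hA : DifferentiableAt ℝ A (s, τ s))
    (hB : DifferentiableAt ℝ B (s, τ s)) (hτ : HasDerivAt τ τ' s) :
    HasDerivAt (fun r => xmap A B (r, τ r)) (xs A B (s, τ s) + τ' • xt A B (s, τ s)) s :=
  (hasDerivAt_comp_graph hA hτ).prodMk (hasDerivAt_comp_graph hB hτ)

theorem hasDerivAt_cmap_comp_graph (hC : DifferentiableAt ℝ C (s, τ s))
    (hD : DifferentiableAt ℝ D (s, τ s)) (hτ : HasDerivAt τ τ' s)
    (hCR1 : pds A (s, τ s) = -pdt D (s, τ s)) (hCR2 : pdt A (s, τ s) = pds D (s, τ s))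
    (hCR3 : pds B (s, τ s) = pdt C (s, τ s)) (hCR4 : pdt B (s, τ s) = -pds C (s, τ s)) :
    HasDerivAt (fun r => cmap C D (r, τ r)) (-xt A B (s, τ s) + τ' • xs A B (s, τ s)) s := by
  have hvelocity : -xt A B (s, τ s) + τ' • xs A B (s, τ s) =
      (-(pds D (s, τ s) + τ' * pdt D (s, τ s)), pds C (s, τ s) + τ' * pdt C (s, τ s)) := by
    ext <;> simp [xs, xt, hCR1, hCR2, hCR3, hCR4, add_comm]
  rw [hvelocity]
  exact (hasDerivAt_comp_graph hD hτ).fun_neg.prodMk (hasDerivAt_comp_graph hC hτ)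

theorem contDiffAt_cmap_comp_graph {n : WithTop ℕ∞} (hC : ContDiffAt ℝ n C (s, τ s))
    (hD : ContDiffAt ℝ n D (s, τ s)) (hτ : ContDiffAt ℝ n τ s) :
    ContDiffAt ℝ n (fun r => cmap C D (r, τ r)) s := by
  have hgraph : ContDiffAt ℝ n (fun r => (r, τ r)) s := contDiffAt_id.prodMk hτ
  exact (hD.comp s hgraph).neg.prodMk (hC.comp s hgraph)

theorem hasDerivAt_comp_graph_of_pds_pdt_eq_det2 {c : ℝ × ℝ}
    (hg : DifferentiableAt ℝ g (s, τ s)) (hτ : HasDerivAt τ τ' s)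
    (hgs : pds g (s, τ s) = det2 (xs A B (s, τ s)) c)
    (hgt : pdt g (s, τ s) = det2 (xt A B (s, τ s)) c) :
    HasDerivAt (fun r => g (r, τ r)) (det2 (xs A B (s, τ s) + τ' • xt A B (s, τ s)) c) s := by
  rw [det2_add_smul_left, ← hgs, ← hgt]
  exact hasDerivAt_comp_graph hg hτ

end GraphCurves

theorem Gss_formula_general
    {Ω : Set (ℝ × ℝ)} (hΩ : IsOpen Ω) {A B C D : ℝ × ℝ → ℝ}
    (hA : DifferentiableOn ℝ A Ω) (hB : DifferentiableOn ℝ B Ω)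
    (hC : ContDiffOn ℝ 1 C Ω) (hD : ContDiffOn ℝ 1 D Ω)
    (hCR1 : ∀ p ∈ Ω, pds A p = -pdt D p) (hCR2 : ∀ p ∈ Ω, pdt A p = pds D p)
    (hCR3 : ∀ p ∈ Ω, pds B p = pdt C p) (hCR4 : ∀ p ∈ Ω, pdt B p = -pds C p)
    {g : ℝ × ℝ → ℝ} (hg : DifferentiableOn ℝ g Ω)
    (hgs : ∀ p ∈ Ω, pds g p = det2 (xs A B p) (cmap C D p))
    (hgt : ∀ p ∈ Ω, pdt g p = det2 (xt A B p) (cmap C D p))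
    {τ : ℝ → ℝ} {s : ℝ} (hτ : ContDiffAt ℝ 1 τ s) (hs : (s, τ s) ∈ Ω) {xb : ℝ × ℝ}
    (hτeq : ∀ᶠ r in 𝓝 s, det2 (xb - xmap A B (r, τ r)) (cmap C D (r, τ r)) = 0)
    (hx : xb = xmap A B (s, τ s)) :
    deriv (deriv (fun r => g (r, τ r))) s = (1 + deriv τ s ^ 2) * deltaMap A B (s, τ s) ∧
    (deriv (deriv (fun r => g (r, τ r))) s = 0 ↔ deltaMap A B (s, τ s) = 0) := by
  have hΩs : Ω ∈ 𝓝 (s, τ s) := hΩ.mem_nhds hs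
  have hmem : ∀ᶠ r in 𝓝 s, Ω ∈ 𝓝 (r, τ r) :=
    (continuousAt_id.prodMk hτ.continuousAt).eventually (hΩ.eventually_mem hs).eventually_nhds
  have hτd : ∀ᶠ r in 𝓝 s, HasDerivAt τ (deriv τ r) r :=
    (hτ.eventually (by simp)).mono fun r hr => (hr.differentiableAt one_ne_zero).hasDerivAt
  have hX : ∀ᶠ r in 𝓝 s, HasDerivAt (fun r => xmap A B (r, τ r))
      (xs A B (r, τ r) + deriv τ r • xt A B (r, τ r)) r := by
    filter_upwards [hmem, hτd] with r hr hτr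
    exact hasDerivAt_xmap_comp_graph (hA.differentiableAt hr) (hB.differentiableAt hr) hτr
  have hG : ∀ᶠ r in 𝓝 s, HasDerivAt (fun r => g (r, τ r))
      (det2 (xs A B (r, τ r) + deriv τ r • xt A B (r, τ r)) (cmap C D (r, τ r))) r := by
    filter_upwards [hmem, hτd] with r hr hτr
    exact hasDerivAt_comp_graph_of_pds_pdt_eq_det2 (hg.differentiableAt hr) hτr
      (hgs _ (mem_of_mem_nhds hr)) (hgt _ (mem_of_mem_nhds hr))
  have hK : ContDiffAt ℝ 1 (fun r => cmap C D (r, τ r)) s :=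
    contDiffAt_cmap_comp_graph (hC.contDiffAt hΩs) (hD.contDiffAt hΩs) hτ
  have hK' := hasDerivAt_cmap_comp_graph ((hC.contDiffAt hΩs).differentiableAt one_ne_zero)
    ((hD.contDiffAt hΩs).differentiableAt one_ne_zero) hτd.self_of_nhds
    (hCR1 _ hs) (hCR2 _ hs) (hCR3 _ hs) (hCR4 _ hs)
  have hGss := (hasDerivAt_deriv_of_hasDerivAt_det2 hX hK hG (hx ▸ hτeq)).deriv
  rw [hK'.deriv, det2_neg_add_smul_add_smul, ← deltaMap_eq_det2] at hGss
  have hne : 1 + deriv τ s ^ 2 ≠ 0 := by positivity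
  exact ⟨hGss, by rw [hGss, mul_eq_zero, or_iff_right hne]⟩

theorem Gss_formula
    (Ω : Set (ℝ × ℝ)) (hΩ : IsOpen Ω)
    (A B C D : ℝ × ℝ → ℝ)
    (hA : ContDiffOn ℝ (⊤ : ℕ∞) A Ω) (hB : ContDiffOn ℝ (⊤ : ℕ∞) B Ω)
    (hC : ContDiffOn ℝ (⊤ : ℕ∞) C Ω) (hD : ContDiffOn ℝ (⊤ : ℕ∞) D Ω)
    (hCR1 : ∀ p ∈ Ω, pds A p = - pdt D p)
    (hCR2 : ∀ p ∈ Ω, pdt A p = pds D p)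
    (hCR3 : ∀ p ∈ Ω, pds B p = pdt C p)
    (hCR4 : ∀ p ∈ Ω, pdt B p = - pds C p)
    (g : ℝ × ℝ → ℝ) (hg : ContDiffOn ℝ (⊤ : ℕ∞) g Ω)
    (hgs : ∀ p ∈ Ω, pds g p = det2 (xs A B p) (cmap C D p))
    (hgt : ∀ p ∈ Ω, pdt g p = det2 (xt A B p) (cmap C D p))
    (s₀ t₀ : ℝ) (hst₀ : (s₀, t₀) ∈ Ω)
    (hne₀ : det2 (xt A B (s₀, t₀)) (cmap C D (s₀, t₀)) ≠ 0)
    (I : Set ℝ) (U : Set (ℝ × ℝ)) (hI : IsOpen I) (hU : IsOpen U)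
    (hs₀ : s₀ ∈ I) (hx₀ : xmap A B (s₀, t₀) ∈ U)
    (T : ℝ → ℝ × ℝ → ℝ)
    (hT : ContDiffOn ℝ (⊤ : ℕ∞) (fun q : ℝ × (ℝ × ℝ) => T q.1 q.2) (I ×ˢ U))
    (hT₀ : T s₀ (xmap A B (s₀, t₀)) = t₀)
    (hTmem : ∀ s ∈ I, ∀ xb ∈ U, (s, T s xb) ∈ Ω)
    (hTeq : ∀ s ∈ I, ∀ xb ∈ U,
      det2 (xb - xmap A B (s, T s xb)) (cmap C D (s, T s xb)) = 0)
    (s : ℝ) (xb : ℝ × ℝ) (hs : s ∈ I) (hxb : xb ∈ U)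
    (hx : xb = xmap A B (s, T s xb))
    :
    deriv (deriv (fun s' => g (s', T s' xb))) s
      = (1 + (deriv (fun s' => T s' xb) s) ^ 2) * deltaMap A B (s, T s xb) ∧
    (deriv (deriv (fun s' => g (s', T s' xb))) s = 0 ↔ deltaMap A B (s, T s xb) = 0) := by
  have hτ : ContDiffAt ℝ (⊤ : ℕ∞) (fun r => T r xb) s :=
    (hT.contDiffAt ((hI.prod hU).mem_nhds ⟨hs, hxb⟩)).comp s (contDiffAt_id.prodMk contDiffAt_const)
  exact Gss_formula_general hΩ (hA.differentiableOn (by simp)) (hB.differentiableOn (by simp))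
    (hC.of_le (by simp)) (hD.of_le (by simp)) hCR1 hCR2 hCR3 hCR4 (hg.differentiableOn (by simp))
    hgs hgt (hτ.of_le (by simp)) (hTmem s hs xb hxb)
    ((hI.eventually_mem hs).mono fun r hr => hTeq r hr xb hxb) hx
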